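/- For every knapsack instance, every ε ∈ (0,1/3), and every p ∈ (0,1], there exist a set Q ⊆ E and a real number d with 1 ≤ d ≤ 2·(K+1)·(τ(ε)/p + 1), where K := ⌈ln(1/(εp))/ln(1+ε)⌉, such that (1/d)·1_Q lies in the convex hull in ℝ^E of the indicator vectors {1_S : S ⊆ E feasible}, and E_R[max{∑_{i∈S} v_i : S ⊆ Q ∩ R feasible}] ≥ (1 − 4ε)·E_R[OPT(R)], where R is the p-sampled active set of E. -/

import Mathlib

open Finset

/-- `τ(ε) := 1 + ln(1/ε) + √(ln²(1/ε) + 2 ln(1/ε))`. -/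
noncomputable def tau (ε : ℝ) : ℝ :=
  1 + Real.log (1 / ε) + Real.sqrt ((Real.log (1 / ε)) ^ 2 + 2 * Real.log (1 / ε))

/-- Expectation of `f` over the random active set `R ⊆ E` obtained by `p`-sampling. -/
noncomputable def sampleExp {ι : Type*} [DecidableEq ι] (E : Finset ι) (p : ℝ)
    (f : Finset ι → ℝ) : ℝ :=
  ∑ A ∈ E.powerset, p ^ A.card * (1 - p) ^ (E.card - A.card) * f A

/-- Optimal knapsack value using only items of `A`:
`OPT(A) = max{∑_{i∈S} vᵢ : S ⊆ A, ∑_{i∈S} wᵢ ≤ C}`. -/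
noncomputable def knapOPT {ι : Type*} (C : ℝ) (w v : ι → ℝ) (A : Finset ι) : ℝ :=
  sSup {x : ℝ | ∃ S : Finset ι, S ⊆ A ∧ (∑ i ∈ S, w i) ≤ C ∧ x = ∑ i ∈ S, v i}

/-!
Let `O` be the expected optimum. Sort the items into `K + 1` classes, within each of which values
agree up to a factor `1 + ε`; class `0` collects all values up to `εO`. From each class keep a core:
the lightest items (the densest ones in class `0`), up to weight about `τ(ε) C / p`. By a Chernoff
bound the active core items of a class weigh at least `C` with probability at least `1 - ε`, and
whenever this happens they can replace, by exchange, whatever the optimum uses from that class.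

Dropping the classes whose active core is too light costs little, although a gate depends on the
items it lets through: by Harris' inequality, keeping a class when its gate opens is at least as
good for a monotone objective as keeping it by an independent coin flip of probability `1 - ε`, and
such random thinning of the classes preserves, in expectation, the fraction `1 - ε` of any solution.

The kept items weigh at most `(K + 1)(τ(ε)/p + 1) C`. In a packing of them into as few knapsacks as
possible any two knapsacks together exceed `C`, which bounds their number.
-/

section Sampling

variable {ι : Type*} [DecidableEq ι] {E : Finset ι} {p : ℝ}

/-- The probability that the `p`-sampled active set of `E` belongs to the family `𝒢`. -/
noncomputable def sampleProb (E : Finset ι) (p : ℝ) (𝒢 : Set (Finset ι)) : ℝ :=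
  sampleExp E p (𝒢.indicator 1)

lemma sampleExp_empty (p : ℝ) (f : Finset ι → ℝ) : sampleExp ∅ p f = f ∅ := by
  simp [sampleExp]

lemma sampleExp_insert {a : ι} (ha : a ∉ E) (p : ℝ) (f : Finset ι → ℝ) :
    sampleExp (insert a E) p f
      = p * sampleExp E p (fun A => f (insert a A)) + (1 - p) * sampleExp E p f := by
  unfold sampleExp
  rw [sum_powerset_insert ha, add_comm, mul_sum, mul_sum]
  congr 1 <;> refine sum_congr rfl fun A hA => ?_ <;> rw [mem_powerset] at hA
  · rw [card_insert_of_notMem ha, card_insert_of_notMem fun h => ha (hA h),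
      Nat.add_sub_add_right]
    ring
  · rw [card_insert_of_notMem ha, Nat.sub_add_comm (card_le_card hA)]
    ring

lemma sampleExp_congr {f g : Finset ι → ℝ} (h : ∀ A ⊆ E, f A = g A) :
    sampleExp E p f = sampleExp E p g :=
  sum_congr rfl fun A hA => by rw [h A (mem_powerset.1 hA)]

lemma sampleExp_mono (hp : p ∈ Set.Icc 0 1) {f g : Finset ι → ℝ} (h : ∀ A ⊆ E, f A ≤ g A) :
    sampleExp E p f ≤ sampleExp E p g := by
  have := sub_nonneg.2 hp.2
  have := hp.1
  exact sum_le_sum fun A hA =>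
    mul_le_mul_of_nonneg_left (h A (mem_powerset.1 hA)) (by positivity)

lemma sampleExp_const (E : Finset ι) (p c : ℝ) : sampleExp E p (fun _ => c) = c := by
  rw [sampleExp, ← sum_mul, sum_pow_mul_eq_add_pow, add_sub_cancel, one_pow, one_mul]

lemma sampleExp_nonneg (hp : p ∈ Set.Icc 0 1) {f : Finset ι → ℝ} (h : ∀ A ⊆ E, 0 ≤ f A) :
    0 ≤ sampleExp E p f :=
  (sampleExp_const E p 0).ge.trans (sampleExp_mono hp h)

lemma sampleExp_add (E : Finset ι) (p : ℝ) (f g : Finset ι → ℝ) :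
    sampleExp E p (fun A => f A + g A) = sampleExp E p f + sampleExp E p g := by
  simp only [sampleExp, mul_add, sum_add_distrib]

lemma sampleExp_const_mul (E : Finset ι) (p c : ℝ) (f : Finset ι → ℝ) :
    sampleExp E p (fun A => c * f A) = c * sampleExp E p f := by
  simp only [sampleExp, mul_sum, mul_left_comm]

lemma sampleExp_sub_const (E : Finset ι) (p c : ℝ) (f : Finset ι → ℝ) :
    sampleExp E p (fun A => f A - c) = sampleExp E p f - c := by
  simp only [sub_eq_add_neg, sampleExp_add, sampleExp_const]

lemma sampleExp_comm {κ : Type*} [DecidableEq κ] (E : Finset ι) (s : Finset κ) (p q : ℝ)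
    (f : Finset ι → Finset κ → ℝ) :
    sampleExp E p (fun A => sampleExp s q fun J => f A J)
      = sampleExp s q fun J => sampleExp E p fun A => f A J := by
  simp only [sampleExp, mul_sum, mul_left_comm]
  exact sum_comm

lemma sampleExp_union {A B : Finset ι} (hAB : Disjoint A B) (p : ℝ) (f : Finset ι → ℝ) :
    sampleExp (A ∪ B) p f = sampleExp A p fun X => sampleExp B p fun Y => f (X ∪ Y) := by
  induction A using Finset.induction_on generalizing f with
  | empty => simp only [sampleExp_empty, empty_union]
  | insert a A ha ih =>
    obtain ⟨haB, hAB⟩ := disjoint_insert_left.1 hAB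
    have haAB : a ∉ A ∪ B := by simp only [mem_union, ha, haB, or_self, not_false_eq_true]
    rw [insert_union, sampleExp_insert haAB, sampleExp_insert ha, ih hAB, ih hAB]
    simp only [insert_union]

lemma sampleExp_eq_sampleExp_filter (P : ι → Prop) [DecidablePred P] (p : ℝ)
    (f : Finset ι → ℝ) :
    sampleExp E p f = sampleExp {i ∈ E | ¬P i} p fun X => sampleExp {i ∈ E | P i} p fun Y =>
      f (X ∪ Y) := by
  rw [← sampleExp_union (disjoint_filter_filter_not E E P).symm, union_comm,
    filter_union_filter_not_eq]

lemma sampleExp_prod (E : Finset ι) (p : ℝ) (f : ι → ℝ) :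
    sampleExp E p (fun A => ∏ i ∈ A, f i) = ∏ i ∈ E, (p * f i + (1 - p)) := by
  rw [prod_add, sampleExp]
  refine sum_congr rfl fun A hA => ?_
  rw [prod_mul_distrib, prod_const, prod_const, card_sdiff_of_subset (mem_powerset.1 hA)]
  ring

lemma sampleExp_sum (E : Finset ι) (p : ℝ) (f : ι → ℝ) :
    sampleExp E p (fun A => ∑ i ∈ A, f i) = p * ∑ i ∈ E, f i := by
  induction E using Finset.induction_on with
  | empty => simp only [sampleExp_empty, sum_empty, mul_zero]
  | insert a E ha ih =>
    have h_insert : sampleExp E p (fun A => ∑ i ∈ insert a A, f i)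
        = f a + sampleExp E p (fun A => ∑ i ∈ A, f i) :=
      calc _ = sampleExp E p (fun A => f a + ∑ i ∈ A, f i) :=
            sampleExp_congr fun A hA => sum_insert fun h => ha (hA h)
        _ = _ := by rw [sampleExp_add, sampleExp_const]
    rw [sampleExp_insert ha, h_insert, ih, sum_insert ha]
    ring

/-- **Harris' inequality**, from the four functions theorem. -/
lemma sampleExp_mul_sampleExp_le (hp : p ∈ Set.Icc 0 1) {f g : Finset ι → ℝ}
    (hf₀ : 0 ≤ f) (hg₀ : 0 ≤ g) (hf : Monotone f) (hg : Monotone g) :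
    sampleExp E p f * sampleExp E p g ≤ sampleExp E p (f * g) := by
  let μ : Finset ι → ℝ := fun A => p ^ #A * (1 - p) ^ (#E - #A)
  have hμ₀ : 0 ≤ μ := fun A => mul_nonneg (pow_nonneg hp.1 _) (pow_nonneg (sub_nonneg.2 hp.2) _)
  have hμ {s t : Finset ι} (hs : s ⊆ E) (ht : t ⊆ E) : μ s * μ t = μ (s ∩ t) * μ (s ∪ t) := by
    have h_card := card_union_add_card_inter s t
    have h_union := card_le_card (union_subset hs ht)
    have h_exp : #E - #s + (#E - #t) = #E - #(s ∩ t) + (#E - #(s ∪ t)) := by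
      have := card_le_card hs
      have := card_le_card ht
      have := card_le_card (inter_subset_left : s ∩ t ⊆ s)
      omega
    simp only [μ]
    rw [mul_mul_mul_comm, mul_mul_mul_comm (p ^ #(s ∩ t)), ← pow_add, ← pow_add, ← pow_add,
      ← pow_add, h_exp, ← h_card, add_comm #(s ∪ t)]
  have h_four := Finset.four_functions_theorem E (mul_nonneg hμ₀ hf₀) (mul_nonneg hμ₀ hg₀) hμ₀
    (mul_nonneg hμ₀ (mul_nonneg hf₀ hg₀)) (fun s hs t ht => ?_) Subset.rfl Subset.rfl
  · have h_one : ∑ A ∈ E.powerset, μ A = 1 := by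
      simpa only [sampleExp, mul_one] using sampleExp_const E p 1
    rwa [powerset_infs_powerset_self, powerset_sups_powerset_self, h_one, one_mul] at h_four
  · calc μ s * f s * (μ t * g t) = μ (s ∩ t) * μ (s ∪ t) * (f s * g t) := by
          rw [← hμ hs ht]; ring
      _ ≤ μ (s ∩ t) * μ (s ∪ t) * (f (s ∪ t) * g (s ∪ t)) := by
          gcongr
          · exact mul_nonneg (hμ₀ _) (hμ₀ _)
          · exact hg₀ t
          · exact hf₀ (s ∪ t)
          · exact hf subset_union_left
          · exact hg subset_union_right
      _ = μ (s ∩ t) * (μ (s ∪ t) * (f (s ∪ t) * g (s ∪ t))) := mul_assoc ..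

end Sampling

section Gating

variable {ι κ : Type*} [DecidableEq κ] {c : ι → κ} {𝒢 : κ → Set (Finset ι)}

open Classical in
/-- The part of `R` lying in open classes: `c` sorts the items into classes, and class `k` is open
if the items of `R` in it form a member of the family `𝒢 k`. -/
noncomputable def gated (c : ι → κ) (𝒢 : κ → Set (Finset ι)) (R : Finset ι) : Finset ι :=
  {i ∈ R | {j ∈ R | c j = c i} ∈ 𝒢 (c i)}

lemma gated_subset (c : ι → κ) (𝒢 : κ → Set (Finset ι)) (R : Finset ι) : gated c 𝒢 R ⊆ R := by
  classical exact filter_subset _ _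

open Classical in
lemma gated_eq_ite {Y : Finset ι} {k : κ} (hY : ∀ i ∈ Y, c i = k) :
    gated c 𝒢 Y = if Y ∈ 𝒢 k then Y else ∅ := by
  have h_class : ∀ i ∈ Y, {j ∈ Y | c j = c i} = Y := fun i hi =>
    filter_true_of_mem fun j hj => (hY j hj).trans (hY i hi).symm
  rw [gated, ← filter_const]
  exact filter_congr fun i hi => by rw [h_class i hi, hY i hi]

variable [DecidableEq ι] {E : Finset ι} {p q : ℝ}

lemma gated_union {X Y : Finset ι} (hXY : ∀ i ∈ X, ∀ j ∈ Y, c i ≠ c j) :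
    gated c 𝒢 (X ∪ Y) = gated c 𝒢 X ∪ gated c 𝒢 Y := by
  classical
  unfold gated
  rw [filter_union]
  congr 1 <;> refine filter_congr fun i hi => ?_
  · rw [filter_union, filter_eq_empty_iff.2 fun j hj => (hXY i hi j hj).symm, union_empty]
  · rw [filter_union, filter_eq_empty_iff.2 fun j hj => hXY j hj i hi, empty_union]

open Classical in
lemma mul_sampleExp_add_le_sampleExp_ite (hp : p ∈ Set.Icc 0 1) {𝒰 : Set (Finset ι)}
    (h𝒰 : IsUpperSet 𝒰) (hq : q ≤ sampleProb E p 𝒰) {g : Finset ι → ℝ} (hg : Monotone g) :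
    q * sampleExp E p g + (1 - q) * g ∅
      ≤ sampleExp E p fun Y => g (if Y ∈ 𝒰 then Y else ∅) := by
  let h : Finset ι → ℝ := fun Y => g Y - g ∅
  have h_nonneg : 0 ≤ h := fun Y => sub_nonneg.2 (hg (empty_subset Y))
  have h_mono : Monotone h := fun _ _ hXY => sub_le_sub_right (hg hXY) _
  have ind_nonneg : (0 : Finset ι → ℝ) ≤ 𝒰.indicator 1 :=
    fun Y => Set.indicator_nonneg (fun _ _ => zero_le_one) Y
  have ind_mono : Monotone (𝒰.indicator (1 : Finset ι → ℝ)) := fun X Y hXY => by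
    by_cases hX : X ∈ 𝒰
    · rw [Set.indicator_of_mem hX, Set.indicator_of_mem (h𝒰 hXY hX)]; rfl
    · rw [Set.indicator_of_notMem hX]; exact ind_nonneg Y
  have h_ite (Y : Finset ι) :
      g (if Y ∈ 𝒰 then Y else ∅) = (h * 𝒰.indicator (1 : Finset ι → ℝ)) Y + g ∅ := by
    by_cases hY : Y ∈ 𝒰 <;> simp [h, hY]
  calc q * sampleExp E p g + (1 - q) * g ∅ = sampleExp E p h * q + g ∅ := by
        rw [show sampleExp E p h = _ from sampleExp_sub_const E p _ g]; ring
    _ ≤ sampleExp E p h * sampleProb E p 𝒰 + g ∅ := by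
        gcongr
        exact sampleExp_nonneg hp fun A _ => h_nonneg A
    _ ≤ sampleExp E p (h * 𝒰.indicator 1) + g ∅ := by
        gcongr
        exact sampleExp_mul_sampleExp_le hp h_nonneg ind_nonneg h_mono ind_mono
    _ = _ := by
        simp only [h_ite, sampleExp_add, sampleExp_const]

lemma sampleExp_filter_insert_class (q : ℝ) {s : Finset κ} {k : κ} (hk : k ∉ s)
    (f : Finset ι → ℝ) :
    sampleExp (insert k s) q (fun J => sampleExp E p fun R => f {i ∈ R | c i ∈ J})
      = sampleExp s q fun J => sampleExp {i ∈ E | c i ≠ k} p fun X =>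
          q * sampleExp {i ∈ E | c i = k} p (fun Y => f ({i ∈ X | c i ∈ J} ∪ Y))
            + (1 - q) * f {i ∈ X | c i ∈ J} := by
  rw [sampleExp_insert hk, ← sampleExp_const_mul, ← sampleExp_const_mul, ← sampleExp_add]
  refine sampleExp_congr fun J hJ => ?_
  rw [← sampleExp_const_mul, ← sampleExp_const_mul, ← sampleExp_add,
    sampleExp_eq_sampleExp_filter (c · = k)]
  refine sampleExp_congr fun X hX => ?_
  rw [sampleExp_add, sampleExp_const_mul, sampleExp_const_mul]
  have hX_insert : {i ∈ X | c i ∈ insert k J} = {i ∈ X | c i ∈ J} :=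
    filter_congr fun i hi => by rw [mem_insert, or_iff_right (mem_filter.1 (hX hi)).2]
  have hY_insert {Y : Finset ι} (hY : Y ⊆ {i ∈ E | c i = k}) : {i ∈ Y | c i ∈ insert k J} = Y :=
    filter_true_of_mem fun i hi => mem_insert.2 (.inl (mem_filter.1 (hY hi)).2)
  have hY_empty {Y : Finset ι} (hY : Y ⊆ {i ∈ E | c i = k}) : {i ∈ Y | c i ∈ J} = ∅ :=
    filter_false_of_mem fun i hi hiJ => hk (hJ ((mem_filter.1 (hY hi)).2 ▸ hiJ))
  rw [← sampleExp_const {i ∈ E | c i = k} p (f {i ∈ X | c i ∈ J})]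
  congr 2 <;> refine sampleExp_congr fun Y hY => ?_
  · rw [filter_union, hX_insert, hY_insert hY]
  · rw [filter_union, hY_empty hY, union_empty]

lemma sampleExp_gated_eq (k : κ) (f : Finset ι → ℝ) :
    sampleExp E p (fun R => f (gated c 𝒢 R))
      = sampleExp {i ∈ E | c i ≠ k} p fun X => sampleExp {i ∈ E | c i = k} p fun Y =>
          f (gated c 𝒢 X ∪ gated c 𝒢 Y) := by
  rw [sampleExp_eq_sampleExp_filter (c · = k)]
  refine sampleExp_congr fun X hX => sampleExp_congr fun Y hY => ?_
  rw [gated_union fun i hi j hj => ?_]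
  rw [(mem_filter.1 (hY hj)).2]
  exact (mem_filter.1 (hX hi)).2

theorem sampleExp_thinning_le_gated (hp : p ∈ Set.Icc 0 1) (hq : q ∈ Set.Icc 0 1)
    {s : Finset κ} (hcE : ∀ i ∈ E, c i ∈ s)
    (h𝒢 : ∀ k ∈ s, IsUpperSet (𝒢 k))
    (h_prob : ∀ k ∈ s, q ≤ sampleProb {i ∈ E | c i = k} p (𝒢 k)) {f : Finset ι → ℝ}
    (hf : Monotone f) :
    sampleExp s q (fun J => sampleExp E p fun R => f {i ∈ R | c i ∈ J})
      ≤ sampleExp E p fun R => f (gated c 𝒢 R) := by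
  classical
  induction s using Finset.induction_on generalizing E f with
  | empty =>
    obtain rfl : E = ∅ := eq_empty_of_forall_notMem fun i hi => notMem_empty _ (hcE i hi)
    simp only [sampleExp_empty, filter_empty, gated, le_refl]
  | insert k s hk ih =>
    let f' : Finset ι → ℝ := fun Z =>
      sampleExp {i ∈ E | c i = k} p fun Y => f (Z ∪ gated c 𝒢 Y)
    have hf' : Monotone f' := fun Z Z' hZ =>
      sampleExp_mono hp fun Y _ => hf (union_subset_union_left hZ)
    have h_filter {l : κ} (hl : l ∈ s) :
        {i ∈ {i ∈ E | c i ≠ k} | c i = l} = {i ∈ E | c i = l} := by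
      rw [filter_filter]
      exact filter_congr fun i _ => and_iff_right_of_imp fun hi => by
        rw [hi]; exact ne_of_mem_of_not_mem hl hk
    calc _ ≤ sampleExp s q fun J => sampleExp {i ∈ E | c i ≠ k} p fun X =>
            f' {i ∈ X | c i ∈ J} := by
          rw [sampleExp_filter_insert_class q hk]
          refine sampleExp_mono hq fun J _ => sampleExp_mono hp fun X _ => ?_
          have h_single := mul_sampleExp_add_le_sampleExp_ite hp
            (h𝒢 k (mem_insert_self k s)) (h_prob k (mem_insert_self k s))
            (g := fun Y => f ({i ∈ X | c i ∈ J} ∪ Y))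
            fun _ _ hY => hf (union_subset_union_right hY)
          rw [union_empty] at h_single
          refine h_single.trans_eq (sampleExp_congr fun Y hY => ?_)
          rw [gated_eq_ite fun i hi => (mem_filter.1 (hY hi)).2]
      _ ≤ sampleExp {i ∈ E | c i ≠ k} p fun X => f' (gated c 𝒢 X) := by
          refine ih (fun i hi => ?_) (fun l hl => h𝒢 l (mem_insert_of_mem hl)) (fun l hl => ?_) hf'
          · obtain ⟨hi, hik⟩ := mem_filter.1 hi
            exact (mem_insert.1 (hcE i hi)).resolve_left hik
          · rw [h_filter hl]
            exact h_prob l (mem_insert_of_mem hl)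
      _ = _ := (sampleExp_gated_eq k f).symm

end Gating

section Chernoff

variable {ι : Type*} [DecidableEq ι] {E : Finset ι} {p ε : ℝ}

lemma one_le_tau (hε : ε ∈ Set.Ioc 0 1) : 1 ≤ tau ε := by
  have h_log : 0 ≤ Real.log (1 / ε) := Real.log_nonneg ((one_le_div hε.1).2 hε.2)
  unfold tau
  linarith [Real.sqrt_nonneg (Real.log (1 / ε) ^ 2 + 2 * Real.log (1 / ε))]

lemma tau_mul_exp_one_sub_tau_le (hε : ε ∈ Set.Ioc 0 1) : tau ε * Real.exp (1 - tau ε) ≤ ε := by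
  have hτ := one_le_tau hε
  have hτ₀ : 0 < tau ε := one_pos.trans_le hτ
  set L := Real.log (1 / ε) with hL
  have hL₀ : 0 ≤ L := Real.log_nonneg ((one_le_div hε.1).2 hε.2)
  have h_root : tau ε + (tau ε)⁻¹ = 2 * (1 + L) := by
    have h_sq : (tau ε - (1 + L)) ^ 2 = L ^ 2 + 2 * L := by
      rw [tau, add_sub_cancel_left, Real.sq_sqrt (by positivity)]
    field_simp
    linear_combination h_sq
  have h_log : Real.log (tau ε) ≤ (tau ε - (tau ε)⁻¹) / 2 := by
    rw [← Real.sinh_log hτ₀]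
    exact Real.self_le_sinh_iff.2 (Real.log_nonneg hτ)
  calc tau ε * Real.exp (1 - tau ε) = Real.exp (Real.log (tau ε) + (1 - tau ε)) := by
        rw [Real.exp_add, Real.exp_log hτ₀]
    _ ≤ Real.exp (-L) := Real.exp_le_exp.2 (by linarith)
    _ = ε := by rw [hL, one_div, Real.log_inv, neg_neg, Real.exp_log hε.1]

lemma sampleExp_rpow_sum_le (hp : p ∈ Set.Icc 0 1) {β : ℝ} (hβ : 0 < β) {x : ι → ℝ}
    (hx : ∀ i ∈ E, x i ∈ Set.Icc 0 1) :
    sampleExp E p (fun A => β ^ ∑ i ∈ A, x i) ≤ Real.exp (-((1 - β) * (p * ∑ i ∈ E, x i))) :=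
  calc sampleExp E p (fun A => β ^ ∑ i ∈ A, x i) = ∏ i ∈ E, (p * β ^ x i + (1 - p)) := by
        simp only [Real.rpow_sum_of_pos hβ, sampleExp_prod]
    _ ≤ ∏ i ∈ E, Real.exp (-((1 - β) * (p * x i))) := by
        have h1p : 0 ≤ 1 - p := sub_nonneg.2 hp.2
        refine prod_le_prod (fun i _ => by have := hp.1; positivity) fun i hi => ?_
        have h_bernoulli : β ^ x i ≤ 1 + x i * (β - 1) := by
          have := rpow_one_add_le_one_add_mul_self (s := β - 1) (by linarith) (hx i hi).1
            (hx i hi).2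
          rwa [add_sub_cancel] at this
        calc p * β ^ x i + (1 - p) ≤ p * (1 + x i * (β - 1)) + (1 - p) := by
              gcongr
              exact hp.1
          _ = -((1 - β) * (p * x i)) + 1 := by ring
          _ ≤ _ := Real.add_one_le_exp _
    _ = _ := by rw [← Real.exp_sum, sum_neg_distrib, ← mul_sum, ← mul_sum]

/-- A **Chernoff bound** for the lower tail, optimized by the base `β = 1 / τ(ε)`. -/
lemma one_sub_le_sampleProb_one_le_sum (hε : ε ∈ Set.Ioc 0 1) (hp : p ∈ Set.Icc 0 1) {x : ι → ℝ}
    (hx : ∀ i ∈ E, x i ∈ Set.Icc 0 1) (h_mean : tau ε ≤ p * ∑ i ∈ E, x i) :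
    1 - ε ≤ sampleProb E p {A | 1 ≤ ∑ i ∈ A, x i} := by
  have hτ := one_le_tau hε
  have hτ₀ : 0 < tau ε := one_pos.trans_le hτ
  have h_markov (A : Finset ι) : 1 - tau ε * (tau ε)⁻¹ ^ ∑ i ∈ A, x i
      ≤ {A : Finset ι | 1 ≤ ∑ i ∈ A, x i}.indicator 1 A := by
    by_cases hA : 1 ≤ ∑ i ∈ A, x i
    · rw [Set.indicator_of_mem (by exact hA)]
      exact sub_le_self _ (by positivity)
    · rw [Set.indicator_of_notMem (by exact hA), sub_nonpos, Real.inv_rpow hτ₀.le,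
        ← div_eq_mul_inv, one_le_div (by positivity)]
      exact Real.rpow_le_self_of_one_le hτ (not_le.1 hA).le
  have h_mgf : sampleExp E p (fun A => (tau ε)⁻¹ ^ ∑ i ∈ A, x i) ≤ Real.exp (1 - tau ε) := by
    refine (sampleExp_rpow_sum_le hp (inv_pos.2 hτ₀) hx).trans (Real.exp_le_exp.2 ?_)
    have := mul_le_mul_of_nonneg_left h_mean (sub_nonneg.2 (inv_le_one_of_one_le₀ hτ))
    rw [sub_mul, inv_mul_cancel₀ hτ₀.ne'] at this
    linarith
  calc 1 - ε ≤ 1 - tau ε * Real.exp (1 - tau ε) :=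
        sub_le_sub_left (tau_mul_exp_one_sub_tau_le hε) 1
    _ ≤ 1 - tau ε * sampleExp E p (fun A => (tau ε)⁻¹ ^ ∑ i ∈ A, x i) := by gcongr
    _ = sampleExp E p fun A => 1 - tau ε * (tau ε)⁻¹ ^ ∑ i ∈ A, x i := by
        simp only [sub_eq_add_neg, ← neg_mul, sampleExp_add, sampleExp_const, sampleExp_const_mul]
    _ ≤ _ := sampleExp_mono hp fun A _ => h_markov A

end Chernoff

section Knapsack

variable {ι κ : Type*} {C p q : ℝ} {w v : ι → ℝ} {A S E : Finset ι}

lemma le_knapOPT (hSA : S ⊆ A) (hS : ∑ i ∈ S, w i ≤ C) : ∑ i ∈ S, v i ≤ knapOPT C w v A := by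
  refine le_csSup (Set.Finite.bddAbove ?_) ⟨S, hSA, hS, rfl⟩
  refine (A.powerset.finite_toSet.image fun S => ∑ i ∈ S, v i).subset ?_
  rintro _ ⟨S, hSA, -, rfl⟩
  exact ⟨S, mem_coe.2 (mem_powerset.2 hSA), rfl⟩

lemma exists_sum_eq_knapOPT (hC : 0 ≤ C) (w v : ι → ℝ) (A : Finset ι) :
    ∃ S ⊆ A, ∑ i ∈ S, w i ≤ C ∧ ∑ i ∈ S, v i = knapOPT C w v A := by
  let 𝓕 := {S ∈ A.powerset | ∑ i ∈ S, w i ≤ C}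
  have h𝓕 {S : Finset ι} : S ∈ 𝓕 ↔ S ⊆ A ∧ ∑ i ∈ S, w i ≤ C := by
    rw [mem_filter, mem_powerset]
  obtain ⟨S, hS, h_max⟩ := exists_max_image 𝓕 (fun S => ∑ i ∈ S, v i)
    ⟨∅, h𝓕.2 ⟨empty_subset A, by rwa [sum_empty]⟩⟩
  obtain ⟨hSA, hSC⟩ := h𝓕.1 hS
  refine ⟨S, hSA, hSC, (le_knapOPT hSA hSC).antisymm (csSup_le ⟨_, S, hSA, hSC, rfl⟩ ?_)⟩
  rintro _ ⟨T, hTA, hTC, rfl⟩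
  exact h_max T (h𝓕.2 ⟨hTA, hTC⟩)

lemma knapOPT_nonneg (hC : 0 ≤ C) (w v : ι → ℝ) (A : Finset ι) : 0 ≤ knapOPT C w v A :=
  sum_empty.symm.trans_le (le_knapOPT (empty_subset A) (by rwa [sum_empty]))

lemma knapOPT_mono (hC : 0 ≤ C) (w v : ι → ℝ) : Monotone (knapOPT C w v) := fun A B hAB => by
  obtain ⟨S, hSA, hSC, hS⟩ := exists_sum_eq_knapOPT hC w v A
  exact hS ▸ le_knapOPT (hSA.trans hAB) hSC

lemma mul_value_le_sampleExp_knapOPT [DecidableEq ι] (hp : p ∈ Set.Icc 0 1) (hC : 0 ≤ C) {i : ι}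
    (hi : i ∈ E) (hwi : w i ≤ C) : p * v i ≤ sampleExp E p (knapOPT C w v) := by
  calc p * v i = sampleExp E p (fun A => ∑ j ∈ A, if i = j then v j else 0) := by
        rw [sampleExp_sum, sum_ite_eq, if_pos hi]
    _ ≤ _ := sampleExp_mono hp fun A _ => by
        rw [sum_ite_eq]
        split_ifs with hiA
        · rw [← sum_singleton v i]
          exact le_knapOPT (singleton_subset_iff.2 hiA) (by rwa [sum_singleton])
        · exact knapOPT_nonneg hC w v A

lemma mul_knapOPT_le_sampleExp_thinning [DecidableEq κ] (hq : q ∈ Set.Icc 0 1) (hC : 0 ≤ C)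
    (hw : ∀ i ∈ A, 0 ≤ w i) {c : ι → κ} {s : Finset κ} (hc : ∀ i ∈ A, c i ∈ s) :
    q * knapOPT C w v A ≤ sampleExp s q fun J => knapOPT C w v {i ∈ A | c i ∈ J} := by
  obtain ⟨S, hSA, hSC, hS⟩ := exists_sum_eq_knapOPT hC w v A
  calc q * knapOPT C w v A = sampleExp s q fun J => ∑ k ∈ J, ∑ i ∈ S with c i = k, v i := by
        rw [sampleExp_sum, sum_fiberwise_of_maps_to fun i hi => hc i (hSA hi), hS]
    _ ≤ _ := sampleExp_mono hq fun J _ => by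
        rw [sum_fiberwise_eq_sum_filter]
        refine le_knapOPT (filter_subset_filter _ hSA) (le_trans ?_ hSC)
        exact sum_le_sum_of_subset_of_nonneg (filter_subset _ _) fun i hi _ => hw i (hSA hi)

end Knapsack

section Substitution

variable {ι κ : Type*} {w v : ι → ℝ} {α δ θ : ℝ} {S B : Finset ι}

/-- `B` contains a set `T` that is no heavier than `S` and almost as valuable: it retains the
fraction `α` of the value of `S`, up to an additive loss `δ`. -/
def HasSubstitute (w v : ι → ℝ) (α δ : ℝ) (S B : Finset ι) : Prop :=
  ∃ T ⊆ B, ∑ i ∈ T, w i ≤ ∑ i ∈ S, w i ∧ α * ∑ i ∈ S, v i - δ ≤ ∑ i ∈ T, v i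

namespace HasSubstitute

lemma of_subset (hα : α ≤ 1) (hδ : 0 ≤ δ) (hv : ∀ i ∈ S, 0 ≤ v i) (hSB : S ⊆ B) :
    HasSubstitute w v α δ S B :=
  ⟨S, hSB, le_rfl, (sub_le_self _ hδ).trans (mul_le_of_le_one_left (sum_nonneg hv) hα)⟩

lemma mono {B' : Finset ι} (hB : B ⊆ B') (h : HasSubstitute w v α δ S B) :
    HasSubstitute w v α δ S B' :=
  let ⟨T, hT, h⟩ := h
  ⟨T, hT.trans hB, h⟩

lemma of_sdiff [DecidableEq ι] (hα : α ≤ 1) (hv : ∀ i ∈ S, 0 ≤ v i)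
    (h : HasSubstitute w v α δ (S \ B) (B \ S)) : HasSubstitute w v α δ S B := by
  obtain ⟨T, hT, hTw, hTv⟩ := h
  have h_disj : Disjoint T (S ∩ B) :=
    disjoint_left.2 fun i hiT hi => (mem_sdiff.1 (hT hiT)).2 (mem_inter.1 hi).1
  have h_split (f : ι → ℝ) := sum_inter_add_sum_sdiff S B f
  have h_inter : α * ∑ i ∈ S ∩ B, v i ≤ ∑ i ∈ S ∩ B, v i :=
    mul_le_of_le_one_left (sum_nonneg fun i hi => hv i (mem_inter.1 hi).1) hα
  refine ⟨T ∪ S ∩ B, union_subset (hT.trans sdiff_subset) inter_subset_right, ?_, ?_⟩ <;>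
    rw [sum_union h_disj, ← h_split] <;> linarith

lemma biUnion [DecidableEq ι] [DecidableEq κ] {c : ι → κ} {s : Finset κ} {δ : κ → ℝ}
    {B : κ → Finset ι} (hS : ∀ i ∈ S, c i ∈ s) (hB : ∀ k ∈ s, ∀ i ∈ B k, c i = k)
    (h : ∀ k ∈ s, HasSubstitute w v α (δ k) {i ∈ S | c i = k} (B k)) :
    HasSubstitute w v α (∑ k ∈ s, δ k) S (s.biUnion B) := by
  choose! T hTB hTw hTv using h
  have h_disj : (s : Set κ).PairwiseDisjoint T := fun k hk l hl hkl =>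
    disjoint_left.2 fun i hik hil =>
      hkl ((hB k hk i (hTB k hk hik)).symm.trans (hB l hl i (hTB l hl hil)))
  have h_fiber (f : ι → ℝ) : ∑ i ∈ S, f i = ∑ k ∈ s, ∑ i ∈ S with c i = k, f i :=
    (sum_fiberwise_of_maps_to hS f).symm
  refine ⟨s.biUnion T, biUnion_mono hTB, ?_, ?_⟩ <;> rw [sum_biUnion h_disj, h_fiber]
  · exact sum_le_sum hTw
  · rw [mul_sum, ← sum_sub_distrib]
    exact sum_le_sum hTv

lemma of_light_of_heavy {V : ℝ} (hθ : 0 < θ) (hB : ∀ i ∈ B, w i ≤ θ ∧ V ≤ v i)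
    (hS : ∀ i ∈ S, θ ≤ w i ∧ α * v i ≤ V) (hSB : ∑ i ∈ S, w i ≤ ∑ i ∈ B, w i) :
    HasSubstitute w v α 0 S B := by
  have hSw : #S * θ ≤ ∑ i ∈ S, w i := by
    simpa only [nsmul_eq_mul] using card_nsmul_le_sum S w θ fun i hi => (hS i hi).1
  have hBw : ∑ i ∈ B, w i ≤ #B * θ := by
    simpa only [nsmul_eq_mul] using sum_le_card_nsmul B w θ fun i hi => (hB i hi).1
  have h_card : #S ≤ #B := by
    exact_mod_cast le_of_mul_le_mul_right (hSw.trans (hSB.trans hBw)) hθ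
  obtain ⟨T, hTB, hT⟩ := exists_subset_card_eq h_card
  refine ⟨T, hTB, ?_, ?_⟩
  · refine le_trans ?_ hSw
    simpa only [nsmul_eq_mul, hT] using sum_le_card_nsmul T w θ fun i hi => (hB i (hTB hi)).1
  · calc α * ∑ i ∈ S, v i - 0 ≤ #S * V := by
          rw [sub_zero, mul_sum, ← nsmul_eq_mul]
          exact sum_le_card_nsmul S _ V fun i hi => (hS i hi).2
      _ ≤ ∑ i ∈ T, v i := by
          simpa only [nsmul_eq_mul, hT] using card_nsmul_le_sum T v V fun i hi => (hB i (hTB hi)).2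

end HasSubstitute

lemma exists_subset_greedy {D W : ℝ} (hθ : 0 ≤ θ) (hD : 0 ≤ D)
    (hB : ∀ i ∈ B, θ * w i ≤ v i ∧ v i ≤ D) (hW : 0 ≤ W) (hWB : W ≤ ∑ i ∈ B, w i) :
    ∃ T ⊆ B, ∑ i ∈ T, w i ≤ W ∧ θ * W - D ≤ ∑ i ∈ T, v i := by
  classical
  induction B using Finset.induction_on with
  | empty =>
    obtain rfl : W = 0 := hWB.antisymm hW
    exact ⟨∅, Subset.rfl, sum_empty.le, by simpa only [mul_zero, zero_sub, sum_empty, neg_nonpos]⟩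
  | insert a s ha ih =>
    have hs : ∀ i ∈ s, θ * w i ≤ v i ∧ v i ≤ D := fun i hi => hB i (mem_insert_of_mem hi)
    rcases le_total W (∑ i ∈ s, w i) with hWs | hWs
    · obtain ⟨T, hT, h⟩ := ih hs hWs
      exact ⟨T, hT.trans (subset_insert a s), h⟩
    · obtain ⟨ha_dense, ha_D⟩ := hB a (mem_insert_self a s)
      refine ⟨s, subset_insert a s, hWs, ?_⟩
      rw [sum_insert ha] at hWB
      calc θ * W - D ≤ θ * (w a + ∑ i ∈ s, w i) - θ * w a := by
            gcongr
            exact ha_dense.trans ha_D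
        _ = ∑ i ∈ s, θ * w i := by rw [← mul_sum]; ring
        _ ≤ ∑ i ∈ s, v i := sum_le_sum fun i hi => (hs i hi).1

lemma HasSubstitute.of_dense_of_sparse {D : ℝ} (hθ : 0 ≤ θ) (hD : 0 ≤ D)
    (hB : ∀ i ∈ B, θ * w i ≤ v i ∧ v i ≤ D) (hS : ∀ i ∈ S, 0 ≤ w i ∧ α * v i ≤ θ * w i)
    (hSB : ∑ i ∈ S, w i ≤ ∑ i ∈ B, w i) : HasSubstitute w v α D S B := by
  obtain ⟨T, hTB, hTw, hTv⟩ :=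
    exists_subset_greedy hθ hD hB (sum_nonneg fun i hi => (hS i hi).1) hSB
  refine ⟨T, hTB, hTw, le_trans (sub_le_sub_right ?_ D) hTv⟩
  rw [mul_sum, mul_sum]
  exact sum_le_sum fun i hi => (hS i hi).2

end Substitution

section Core

variable {ι β : Type*} [DecidableEq ι] {w v : ι → ℝ} {t m α δ : ℝ} {F : Finset ι}

/-- A part `Q` of the class `F` that can stand in for `F`: either all of it, or a set of weight at
least `t` each of whose subsets `B` substitutes for every subset of `F` that is no heavier than `B`
and meets `Q` only inside `B`. -/
structure IsCore (w v : ι → ℝ) (t α δ : ℝ) (F Q : Finset ι) : Prop where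
  subset : Q ⊆ F
  le_sum : Q ≠ F → t ≤ ∑ i ∈ Q, w i
  hasSubstitute : Q ≠ F → ∀ B ⊆ Q, ∀ S ⊆ F, S ∩ Q ⊆ B → ∑ i ∈ S, w i ≤ ∑ i ∈ B, w i →
    HasSubstitute w v α δ S B

lemma exists_prefix [LinearOrder β] (key : ι → β) (htm : 0 ≤ t + m) (hw : ∀ i ∈ F, w i ≤ m) :
    ∃ Q ⊆ F, ∑ i ∈ Q, w i ≤ t + m ∧ (Q = F ∨ t ≤ ∑ i ∈ Q, w i ∧
      ∃ b ∈ F \ Q, (∀ i ∈ Q, key i ≤ key b) ∧ ∀ i ∈ F \ Q, key b ≤ key i) := by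
  induction F using Finset.induction_on_max_value key with
  | empty => exact ⟨∅, Subset.rfl, sum_empty.trans_le htm, .inl rfl⟩
  | insert a s ha ha_max ih =>
    by_cases h_all : ∑ i ∈ insert a s, w i ≤ t + m
    · exact ⟨insert a s, Subset.rfl, h_all, .inl rfl⟩
    obtain ⟨Q, hQs, hQ, rfl | ⟨htQ, b, hb, hQb, hbs⟩⟩ := ih fun i hi => hw i (mem_insert_of_mem hi)
    · rw [sum_insert ha] at h_all
      refine ⟨Q, subset_insert a Q, hQ, .inr ⟨?_, a, ?_, ha_max, ?_⟩⟩
      · linarith [hw a (mem_insert_self a Q)]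
      · exact mem_sdiff.2 ⟨mem_insert_self a Q, ha⟩
      · intro i hi
        obtain rfl := (mem_insert.1 (mem_sdiff.1 hi).1).resolve_right (mem_sdiff.1 hi).2
        exact le_rfl
    · have h_sdiff : insert a s \ Q = insert a (s \ Q) :=
        insert_sdiff_of_notMem s fun h => ha (hQs h)
      refine ⟨Q, hQs.trans (subset_insert a s), hQ, .inr ⟨htQ, b, ?_, hQb, ?_⟩⟩ <;> rw [h_sdiff]
      · exact mem_insert_of_mem hb
      · exact forall_mem_insert _ _ _ |>.2 ⟨ha_max b (mem_sdiff.1 hb).1, hbs⟩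

lemma exists_isCore_of_exchange [LinearOrder β] (key : ι → β) (htm : 0 ≤ t + m)
    (hw : ∀ i ∈ F, w i ≤ m) (hα : α ≤ 1) (hv : ∀ i ∈ F, 0 ≤ v i)
    (h_exchange : ∀ b ∈ F, ∀ S ⊆ F, ∀ B ⊆ F, (∀ i ∈ B, key i ≤ key b) → (∀ i ∈ S, key b ≤ key i) →
      ∑ i ∈ S, w i ≤ ∑ i ∈ B, w i → HasSubstitute w v α δ S B) :
    ∃ Q, IsCore w v t α δ F Q ∧ ∑ i ∈ Q, w i ≤ t + m := by
  obtain ⟨Q, hQF, hQ, h_eq | ⟨htQ, b, hb, hQb, hbF⟩⟩ := exists_prefix key htm hw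
  · exact ⟨Q, ⟨hQF, (absurd h_eq ·), (absurd h_eq ·)⟩, hQ⟩
  refine ⟨Q, ⟨hQF, fun _ => htQ, fun _ B hBQ S hSF hSQ hSB => ?_⟩, hQ⟩
  refine .of_sdiff hα (fun i hi => hv i (hSF hi)) <|
    h_exchange b (mem_sdiff.1 hb).1 (S \ B) (sdiff_subset.trans hSF) (B \ S)
      (sdiff_subset.trans (hBQ.trans hQF)) (fun i hi => hQb i (hBQ (mem_sdiff.1 hi).1)) ?_
      (sum_sdiff_le_sum_sdiff.2 hSB)
  intro i hi
  obtain ⟨hiS, hiB⟩ := mem_sdiff.1 hi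
  exact hbF i (mem_sdiff.2 ⟨hSF hiS, fun hiQ => hiB (hSQ (mem_inter.2 ⟨hiS, hiQ⟩))⟩)

lemma exists_isCore_of_value_le {D : ℝ} (htm : 0 ≤ t + m) (hw : ∀ i ∈ F, 0 < w i ∧ w i ≤ m)
    (hα : α ≤ 1) (hD : 0 ≤ D) (hv : ∀ i ∈ F, 0 ≤ v i ∧ v i ≤ D) :
    ∃ Q, IsCore w v t α D F Q ∧ ∑ i ∈ Q, w i ≤ t + m := by
  refine exists_isCore_of_exchange (fun i => -(v i / w i)) htm (fun i hi => (hw i hi).2) hα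
    (fun i hi => (hv i hi).1) fun b hb S hSF B hBF hB hS hSB => ?_
  refine .of_dense_of_sparse (θ := v b / w b) (div_nonneg (hv b hb).1 (hw b hb).1.le) hD
    (fun i hi => ⟨?_, (hv i (hBF hi)).2⟩) (fun i hi => ⟨(hw i (hSF hi)).1.le, ?_⟩) hSB
  · exact (le_div_iff₀ (hw i (hBF hi)).1).1 (neg_le_neg_iff.1 (hB i hi))
  · refine (mul_le_of_le_one_left (hv i (hSF hi)).1 hα).trans ?_
    exact (div_le_iff₀ (hw i (hSF hi)).1).1 (neg_le_neg_iff.1 (hS i hi))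

lemma exists_isCore_of_value_mem_Icc {V V' : ℝ} (htm : 0 ≤ t + m)
    (hw : ∀ i ∈ F, 0 < w i ∧ w i ≤ m) (hα : α ∈ Set.Icc 0 1) (hαV : α * V' ≤ V) (hV : 0 ≤ V)
    (hv : ∀ i ∈ F, v i ∈ Set.Icc V V') :
    ∃ Q, IsCore w v t α 0 F Q ∧ ∑ i ∈ Q, w i ≤ t + m := by
  refine exists_isCore_of_exchange w htm (fun i hi => (hw i hi).2) hα.2
    (fun i hi => hV.trans (hv i hi).1) fun b hb S hSF B hBF hB hS hSB => ?_
  exact .of_light_of_heavy (hw b hb).1 (fun i hi => ⟨hB i hi, (hv i (hBF hi)).1⟩)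
    (fun i hi => ⟨hS i hi, (mul_le_mul_of_nonneg_left (hv i (hSF hi)).2 hα.1).trans hαV⟩) hSB

end Core

section ValueClasses

variable {ε r : ℝ}

/-- The index of the value class of an item of relative value `r`: class `0` collects the relative
values in `[0, 1]`, class `j + 1` those in `((1 + ε)^j, (1 + ε)^(j + 1)]`. (Relative value `0`
lands in class `0` because `Real.logb (1 + ε) 0 = 0`.) -/
noncomputable def valueClass (ε r : ℝ) : ℕ := ⌈Real.logb (1 + ε) r⌉₊

lemma valueClass_mono (hε : 0 < ε) {ρ : ℝ} (hr : 0 ≤ r) (hρ : 1 ≤ ρ) (hrρ : r ≤ ρ) :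
    valueClass ε r ≤ valueClass ε ρ := by
  have h_base : 1 < 1 + ε := lt_add_of_pos_right 1 hε
  refine Nat.ceil_mono ?_
  rcases hr.eq_or_lt with rfl | hr
  · rw [Real.logb_zero]
    exact Real.logb_nonneg h_base hρ
  · exact Real.logb_le_logb_of_le h_base hr hrρ

lemma le_one_of_valueClass_eq_zero (hε : 0 < ε) (hr : 0 ≤ r) (h : valueClass ε r = 0) : r ≤ 1 := by
  rcases hr.eq_or_lt with rfl | hr
  · exact zero_le_one
  · rwa [valueClass, Nat.ceil_eq_zero, Real.logb_nonpos_iff (lt_add_of_pos_right 1 hε) hr] at h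

lemma mem_Icc_of_valueClass_eq_succ (hε : 0 < ε) (hr : 0 ≤ r) {j : ℕ}
    (h : valueClass ε r = j + 1) : r ∈ Set.Icc ((1 + ε) ^ j) ((1 + ε) ^ (j + 1)) := by
  have h_base : 1 < 1 + ε := lt_add_of_pos_right 1 hε
  rcases hr.eq_or_lt with rfl | hr
  · simp only [valueClass, Real.logb_zero, Nat.ceil_zero, right_eq_add, Nat.add_eq_zero_iff,
      one_ne_zero, and_false] at h
  · obtain ⟨h_lower, h_upper⟩ := (Nat.ceil_eq_iff j.succ_ne_zero).1 h
    rw [Nat.succ_sub_one, Real.lt_logb_iff_rpow_lt h_base hr, Real.rpow_natCast] at h_lower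
    rw [Real.logb_le_iff_le_rpow h_base hr, Real.rpow_natCast] at h_upper
    exact ⟨h_lower.le, h_upper⟩

lemma exists_isCore_of_valueClass {ι : Type*} [DecidableEq ι] {w v : ι → ℝ} {t m U : ℝ}
    {F : Finset ι} {k : ℕ} (htm : 0 ≤ t + m) (hw : ∀ i ∈ F, 0 < w i ∧ w i ≤ m)
    (hε : ε ∈ Set.Ioc 0 1) (hU : 0 < U) (hv : ∀ i ∈ F, 0 ≤ v i)
    (hF : ∀ i ∈ F, valueClass ε (v i / U) = k) :
    ∃ Q, IsCore w v t (1 - ε) (if k = 0 then U else 0) F Q ∧ ∑ i ∈ Q, w i ≤ t + m := by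
  have hr {i : ι} (hi : i ∈ F) : 0 ≤ v i / U := div_nonneg (hv i hi) hU.le
  have hα : 1 - ε ∈ Set.Icc 0 1 := ⟨sub_nonneg.2 hε.2, sub_le_self 1 hε.1.le⟩
  rcases k with _ | j
  · refine exists_isCore_of_value_le htm hw hα.2 hU.le fun i hi => ⟨hv i hi, ?_⟩
    exact (div_le_one hU).1 (le_one_of_valueClass_eq_zero hε.1 (hr hi) (hF i hi))
  · have h_base : 0 < 1 + ε := add_pos one_pos hε.1
    refine exists_isCore_of_value_mem_Icc (V := (1 + ε) ^ j * U) (V' := (1 + ε) ^ (j + 1) * U)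
      htm hw hα ?_ (by positivity) fun i hi => ?_
    · calc (1 - ε) * ((1 + ε) ^ (j + 1) * U) = (1 - ε ^ 2) * ((1 + ε) ^ j * U) := by ring
        _ ≤ (1 + ε) ^ j * U :=
          mul_le_of_le_one_left (by positivity) (sub_le_self 1 (sq_nonneg ε))
    · obtain ⟨h_lower, h_upper⟩ := mem_Icc_of_valueClass_eq_succ hε.1 (hr hi) (hF i hi)
      exact ⟨(le_div_iff₀ hU).1 h_lower, (div_le_iff₀ hU).1 h_upper⟩

end ValueClasses

section Sparsifier

variable {ι κ : Type*} [DecidableEq ι] [DecidableEq κ] {E F R S : Finset ι} {w v : ι → ℝ}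
  {C p ε t α : ℝ}

/-- The gate of a core `Q` of the class `F`: the active items of `Q` must be able to outweigh every
feasible set, unless nothing was discarded. -/
def coreGate (w : ι → ℝ) (C : ℝ) (F Q : Finset ι) : Set (Finset ι) :=
  {A | Q ≠ F → C ≤ ∑ i ∈ A ∩ Q, w i}

lemma isUpperSet_coreGate {Q : Finset ι} (hw : ∀ i ∈ Q, 0 ≤ w i) :
    IsUpperSet (coreGate w C F Q) := fun _ _ hAB hA hQF =>
  (hA hQF).trans <| sum_le_sum_of_subset_of_nonneg (inter_subset_inter_right hAB) fun i hi _ =>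
    hw i (mem_inter.1 hi).2

lemma one_sub_le_sampleProb_coreGate (hε : ε ∈ Set.Ioc 0 1) (hp : p ∈ Set.Ioc 0 1) (hC : 0 < C)
    {Q : Finset ι} (hw : ∀ i ∈ F, 0 ≤ w i ∧ w i ≤ C) (hQF : Q ⊆ F)
    (hQ : Q ≠ F → tau ε / p * C ≤ ∑ i ∈ Q, w i) :
    1 - ε ≤ sampleProb F p (coreGate w C F Q) := by
  have hp' : p ∈ Set.Icc 0 1 := Set.Ioc_subset_Icc_self hp
  by_cases h_eq : Q = F
  · have h_univ : coreGate w C F Q = Set.univ := Set.eq_univ_of_forall fun A hne => absurd h_eq hne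
    rw [sampleProb, h_univ, Set.indicator_univ]
    exact (sub_le_self 1 hε.1.le).trans_eq (sampleExp_const F p 1).symm
  let x : ι → ℝ := fun i => if i ∈ Q then w i / C else 0
  have hx_sum (A : Finset ι) : ∑ i ∈ A, x i = (∑ i ∈ A ∩ Q, w i) / C := by
    rw [sum_ite_mem, sum_div]
  have hx : ∀ i ∈ F, x i ∈ Set.Icc 0 1 := fun i hi => by
    simp only [x]
    split_ifs
    · exact ⟨div_nonneg (hw i hi).1 hC.le, (div_le_one hC).2 (hw i hi).2⟩
    · exact ⟨le_rfl, zero_le_one⟩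
  have h_mean : tau ε ≤ p * ∑ i ∈ F, x i := by
    rw [hx_sum, inter_eq_right.2 hQF, ← div_le_iff₀' hp.1, le_div_iff₀ hC]
    exact hQ h_eq
  have h_gate : coreGate w C F Q = {A | 1 ≤ ∑ i ∈ A, x i} := by
    ext A
    rw [coreGate, Set.mem_ofPred_eq, Set.mem_ofPred_eq, hx_sum, one_le_div hC,
      forall_prop_of_true h_eq]
  rw [h_gate]
  exact one_sub_le_sampleProb_one_le_sum hε hp' hx h_mean

lemma IsCore.hasSubstitute_inter {δ : ℝ} {Q : Finset ι} (hQ : IsCore w v t α δ F Q) (hα : α ≤ 1)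
    (hδ : 0 ≤ δ) (hv : ∀ i ∈ F, 0 ≤ v i) (hR : R ∈ coreGate w C F Q) (hSF : S ⊆ F) (hSR : S ⊆ R)
    (hS : ∑ i ∈ S, w i ≤ C) : HasSubstitute w v α δ S (R ∩ Q) := by
  by_cases h_eq : Q = F
  · exact .of_subset hα hδ (fun i hi => hv i (hSF hi)) (subset_inter hSR (h_eq ▸ hSF))
  · exact hQ.hasSubstitute h_eq (R ∩ Q) inter_subset_right S hSF (inter_subset_inter_right hSR)
      (hS.trans (hR h_eq))

variable {c : ι → κ} {s : Finset κ} {δ : κ → ℝ} {Q : κ → Finset ι}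

lemma hasSubstitute_of_subset_gated (hα : α ≤ 1) (hδ : ∀ k ∈ s, 0 ≤ δ k)
    (hv : ∀ i ∈ E, 0 ≤ v i) (hc : ∀ i ∈ E, c i ∈ s)
    (hQ : ∀ k ∈ s, IsCore w v t α (δ k) {i ∈ E | c i = k} (Q k)) (hRE : R ⊆ E)
    (hSR : S ⊆ gated c (fun k => coreGate w C {i ∈ E | c i = k} (Q k)) R)
    (hw : ∀ i ∈ S, 0 ≤ w i) (hS : ∑ i ∈ S, w i ≤ C) :
    HasSubstitute w v α (∑ k ∈ s, δ k) S (s.biUnion Q ∩ R) := by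
  classical
  have hSE : S ⊆ E := hSR.trans ((gated_subset _ _ R).trans hRE)
  rw [biUnion_inter]
  refine .biUnion (fun i hi => hc i (hSE hi))
    (fun k hk i hi => (mem_filter.1 ((hQ k hk).subset (mem_inter.1 hi).1)).2) fun k hk => ?_
  have hv_class {A : Finset ι} (hA : A ⊆ E) : ∀ i ∈ {i ∈ A | c i = k}, 0 ≤ v i := fun i hi =>
    hv i (hA (mem_filter.1 hi).1)
  rcases {i ∈ S | c i = k}.eq_empty_or_nonempty with h_empty | ⟨i, hi⟩
  · rw [h_empty]
    exact .of_subset hα (hδ k hk) (fun _ h => absurd h (notMem_empty _)) (empty_subset _)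
  obtain ⟨hiS, rfl⟩ := mem_filter.1 hi
  have h_open := (mem_filter.1 (hSR hiS)).2
  refine ((hQ _ hk).hasSubstitute_inter hα (hδ _ hk) (hv_class Subset.rfl) h_open
    (filter_subset_filter _ hSE) (filter_subset_filter _ (hSR.trans (gated_subset _ _ R))) ?_).mono
      ?_
  · exact (sum_le_sum_of_subset_of_nonneg (filter_subset _ S) fun j hj _ => hw j hj).trans hS
  · rw [inter_comm]
    exact inter_subset_inter_left (filter_subset _ R)

lemma mul_knapOPT_gated_sub_le (hC : 0 ≤ C) (hα : α ≤ 1) (hδ : ∀ k ∈ s, 0 ≤ δ k)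
    (hw : ∀ i ∈ E, 0 ≤ w i) (hv : ∀ i ∈ E, 0 ≤ v i) (hc : ∀ i ∈ E, c i ∈ s)
    (hQ : ∀ k ∈ s, IsCore w v t α (δ k) {i ∈ E | c i = k} (Q k)) (hRE : R ⊆ E) :
    α * knapOPT C w v (gated c (fun k => coreGate w C {i ∈ E | c i = k} (Q k)) R) - ∑ k ∈ s, δ k
      ≤ knapOPT C w v (s.biUnion Q ∩ R) := by
  obtain ⟨S, hSR, hSC, hS⟩ := exists_sum_eq_knapOPT hC w v
    (gated c (fun k => coreGate w C {i ∈ E | c i = k} (Q k)) R)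
  have hSE : S ⊆ E := hSR.trans ((gated_subset _ _ R).trans hRE)
  obtain ⟨T, hT, hTw, hTv⟩ := hasSubstitute_of_subset_gated hα hδ hv hc hQ hRE hSR
    (fun i hi => hw i (hSE hi)) hSC
  exact hS ▸ hTv.trans (le_knapOPT hT (hTw.trans hSC))

theorem le_sampleExp_knapOPT_biUnion (hε : ε ∈ Set.Ioc 0 1) (hp : p ∈ Set.Ioc 0 1) (hC : 0 < C)
    (hw : ∀ i ∈ E, 0 ≤ w i ∧ w i ≤ C) (hv : ∀ i ∈ E, 0 ≤ v i) (hα : α ∈ Set.Icc 0 1)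
    (hδ : ∀ k ∈ s, 0 ≤ δ k) (hc : ∀ i ∈ E, c i ∈ s)
    (hQ : ∀ k ∈ s, IsCore w v (tau ε / p * C) α (δ k) {i ∈ E | c i = k} (Q k)) :
    α * ((1 - ε) * sampleExp E p (knapOPT C w v)) - ∑ k ∈ s, δ k
      ≤ sampleExp E p fun R => knapOPT C w v (s.biUnion Q ∩ R) := by
  have hp' : p ∈ Set.Icc 0 1 := Set.Ioc_subset_Icc_self hp
  have hq : 1 - ε ∈ Set.Icc 0 1 := ⟨sub_nonneg.2 hε.2, sub_le_self 1 hε.1.le⟩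
  let 𝒢 : κ → Set (Finset ι) := fun k => coreGate w C {i ∈ E | c i = k} (Q k)
  have h𝒢 : ∀ k ∈ s, IsUpperSet (𝒢 k) := fun k hk => isUpperSet_coreGate fun i hi =>
    (hw i (mem_filter.1 ((hQ k hk).subset hi)).1).1
  have h_prob : ∀ k ∈ s, 1 - ε ≤ sampleProb {i ∈ E | c i = k} p (𝒢 k) := fun k hk =>
    one_sub_le_sampleProb_coreGate hε hp hC (fun i hi => hw i (mem_filter.1 hi).1)
      (hQ k hk).subset (hQ k hk).le_sum
  have h_gated : (1 - ε) * sampleExp E p (knapOPT C w v)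
      ≤ sampleExp E p fun R => knapOPT C w v (gated c 𝒢 R) :=
    calc (1 - ε) * sampleExp E p (knapOPT C w v)
        = sampleExp E p fun R => (1 - ε) * knapOPT C w v R := (sampleExp_const_mul ..).symm
      _ ≤ sampleExp E p fun R => sampleExp s (1 - ε) fun J => knapOPT C w v {i ∈ R | c i ∈ J} :=
        sampleExp_mono hp' fun R hR => mul_knapOPT_le_sampleExp_thinning hq hC.le
          (fun i hi => (hw i (hR hi)).1) fun i hi => hc i (hR hi)
      _ = sampleExp s (1 - ε) fun J => sampleExp E p fun R => knapOPT C w v {i ∈ R | c i ∈ J} :=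
        sampleExp_comm ..
      _ ≤ sampleExp E p fun R => knapOPT C w v (gated c 𝒢 R) :=
        sampleExp_thinning_le_gated hp' hq hc h𝒢 h_prob (knapOPT_mono hC.le w v)
  calc α * ((1 - ε) * sampleExp E p (knapOPT C w v)) - ∑ k ∈ s, δ k
      ≤ α * (sampleExp E p fun R => knapOPT C w v (gated c 𝒢 R)) - ∑ k ∈ s, δ k :=
        sub_le_sub_right (mul_le_mul_of_nonneg_left h_gated hα.1) _
    _ = sampleExp E p fun R => α * knapOPT C w v (gated c 𝒢 R) - ∑ k ∈ s, δ k := by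
        rw [sampleExp_sub_const, sampleExp_const_mul]
    _ ≤ _ := sampleExp_mono hp' fun R hR =>
        mul_knapOPT_gated_sub_le hC.le hα.2 hδ (fun i hi => (hw i hi).1) hv hc hQ hR

end Sparsifier

section Packing

variable {ι κ : Type*} {E Q : Finset ι} {w : ι → ℝ} {C : ℝ}

lemma card_mul_le_two_mul_sum {P : Finset κ} (hP : 2 ≤ #P) {W : κ → ℝ}
    (hW : (P : Set κ).Pairwise fun k l => C ≤ W k + W l) : #P * C ≤ 2 * ∑ k ∈ P, W k := by
  classical
  have hP' : (0 : ℝ) < #P - 1 := sub_pos.2 (by exact_mod_cast hP)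
  have h_row : ∀ k ∈ P, (#P - 1) * C ≤ (#P - 1) * W k + (∑ l ∈ P, W l - W k) := fun k hk =>
    calc (#P - 1) * C = ∑ _l ∈ P.erase k, C := by
          rw [sum_const, nsmul_eq_mul, cast_card_erase_of_mem hk]
      _ ≤ ∑ l ∈ P.erase k, (W k + W l) := sum_le_sum fun _ hl =>
          hW hk (mem_of_mem_erase hl) (ne_of_mem_erase hl).symm
      _ = _ := by
          rw [sum_add_distrib, sum_const, nsmul_eq_mul, cast_card_erase_of_mem hk,
            sum_erase_eq_sub hk]
  have h_sum := sum_le_sum h_row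
  rw [sum_const, sum_add_distrib, sum_sub_distrib, sum_const, ← mul_sum, nsmul_eq_mul,
    nsmul_eq_mul] at h_sum
  refine le_of_mul_le_mul_left ?_ hP'
  linarith

lemma exists_card_image_lt_of_add_le [DecidableEq κ] (hC : 0 ≤ C) {b : ι → κ}
    (hb : ∀ j, ∑ i ∈ Q with b i = j, w i ≤ C) {k l : κ} (hk : k ∈ Q.image b) (hl : l ∈ Q.image b)
    (hkl : k ≠ l) (h_fits : ∑ i ∈ Q with b i = k, w i + ∑ i ∈ Q with b i = l, w i ≤ C) :
    ∃ b' : ι → κ, (∀ j, ∑ i ∈ Q with b' i = j, w i ≤ C) ∧ #(Q.image b') < #(Q.image b) := by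
  classical
  let b' : ι → κ := fun i => if b i = l then k else b i
  refine ⟨b', fun j => ?_, ?_⟩
  · rcases eq_or_ne j l with rfl | hjl
    · have h_empty : {i ∈ Q | b' i = j} = ∅ := by grind
      rwa [h_empty, sum_empty]
    rcases eq_or_ne j k with rfl | hjk
    · have h_merge : {i ∈ Q | b' i = j} = {i ∈ Q | b i = j} ∪ {i ∈ Q | b i = l} := by grind
      have h_disj : Disjoint {i ∈ Q | b i = j} {i ∈ Q | b i = l} :=
        disjoint_filter.2 fun i _ hij hil => hkl (hij.symm.trans hil)
      rwa [h_merge, sum_union h_disj]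
    · have h_same : {i ∈ Q | b' i = j} = {i ∈ Q | b i = j} := by grind
      exact h_same ▸ hb j
  · have h_image : Q.image b' ⊆ (Q.image b).erase l := by grind
    exact (card_le_card h_image).trans_lt (card_erase_lt_of_mem hl)

variable [DecidableEq ι]

lemma exists_packing (hC : 0 ≤ C) (hw : ∀ i ∈ Q, w i ≤ C) :
    ∃ b : ι → ι, (∀ k, ∑ i ∈ Q with b i = k, w i ≤ C) ∧
      (Q.image b : Set ι).Pairwise fun k l =>
        C < ∑ i ∈ Q with b i = k, w i + ∑ i ∈ Q with b i = l, w i := by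
  have h_singletons (k : ι) : ∑ i ∈ Q with id i = k, w i ≤ C := by
    simp only [id, filter_eq']
    split_ifs with hk
    · exact (sum_singleton w k).trans_le (hw k hk)
    · exact sum_empty.trans_le hC
  obtain ⟨b, hb, h_min⟩ := exists_minimalFor_of_wellFoundedLT
    (fun b : ι → ι => ∀ k, ∑ i ∈ Q with b i = k, w i ≤ C) (fun b => #(Q.image b))
    ⟨id, h_singletons⟩
  refine ⟨b, hb, fun k hk l hl hkl => lt_of_not_ge fun h_fits => ?_⟩
  obtain ⟨b', hb', h_lt⟩ := exists_card_image_lt_of_add_le hC hb hk hl hkl h_fits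
  exact h_lt.not_ge (h_min hb' h_lt.le)

/-- The knapsack polytope: the convex hull of the indicator vectors of the feasible sets. -/
def knapsackPolytope (E : Finset ι) (C : ℝ) (w : ι → ℝ) : Set (ι → ℝ) :=
  convexHull ℝ {x | ∃ S : Finset ι, S ⊆ E ∧ (∑ i ∈ S, w i) ≤ C ∧
    x = fun i => if i ∈ S then (1 : ℝ) else 0}

lemma one_div_card_mul_indicator_mem_knapsackPolytope [DecidableEq κ] (hQE : Q ⊆ E) {P : Finset κ}
    (hP : P.Nonempty) {b : ι → κ} (hbP : ∀ i ∈ Q, b i ∈ P)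
    (hb : ∀ k, ∑ i ∈ Q with b i = k, w i ≤ C) :
    (fun i => 1 / (#P : ℝ) * if i ∈ Q then 1 else 0) ∈ knapsackPolytope E C w := by
  have hP₀ : (#P : ℝ) ≠ 0 := Nat.cast_ne_zero.2 hP.card_ne_zero
  have h_eq : (fun i => 1 / (#P : ℝ) * if i ∈ Q then 1 else 0)
      = ∑ k ∈ P, (1 / (#P : ℝ)) • fun i => if i ∈ ({i ∈ Q | b i = k} : Finset ι) then 1 else 0 := by
    ext i
    rw [← smul_sum, Pi.smul_apply, smul_eq_mul, Finset.sum_apply]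
    congr 1
    by_cases hi : i ∈ Q
    · simp only [mem_filter, hi, true_and, if_true, sum_ite_eq, hbP i hi]
    · simp only [mem_filter, hi, false_and, if_false, sum_const_zero]
  rw [h_eq]
  refine (convex_convexHull ℝ _).sum_mem (fun _ _ => by positivity) ?_ fun k _ =>
    subset_convexHull ℝ _ ⟨_, (filter_subset _ Q).trans hQE, hb k, rfl⟩
  rw [sum_const, nsmul_eq_mul, mul_one_div_cancel hP₀]

lemma exists_one_div_mul_indicator_mem_knapsackPolytope (hC : 0 < C) (hw : ∀ i ∈ Q, w i ≤ C)
    (hQE : Q ⊆ E) {D : ℝ} (hD : 1 ≤ D) (hQ : 2 * ∑ i ∈ Q, w i ≤ D * C) :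
    ∃ d : ℝ, 1 ≤ d ∧ d ≤ D ∧
      (fun i => 1 / d * if i ∈ Q then (1 : ℝ) else 0) ∈ knapsackPolytope E C w := by
  obtain ⟨b, hb, h_pair⟩ := exists_packing hC.le hw
  rcases Q.eq_empty_or_nonempty with rfl | hQ_ne
  · refine ⟨1, le_rfl, hD, subset_convexHull ℝ _ ⟨∅, hQE, sum_empty.trans_le hC.le, ?_⟩⟩
    simp only [div_one, one_mul]
  have h_nonempty := hQ_ne.image b
  have hbQ : ∀ i ∈ Q, b i ∈ Q.image b := fun i => mem_image_of_mem b
  refine ⟨#(Q.image b), by exact_mod_cast h_nonempty.card_pos, ?_,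
    one_div_card_mul_indicator_mem_knapsackPolytope hQE h_nonempty hbQ hb⟩
  rcases (Nat.one_le_iff_ne_zero.2 h_nonempty.card_ne_zero).eq_or_lt with h_one | h_two
  · rwa [← h_one, Nat.cast_one]
  · refine le_of_mul_le_mul_right (le_trans ?_ hQ) hC
    rw [← sum_fiberwise_of_maps_to hbQ]
    exact card_mul_le_two_mul_sum h_two (h_pair.mono' fun _ _ => le_of_lt)

end Packing

section Main

variable {ι : Type*} [DecidableEq ι] {E : Finset ι} {w v : ι → ℝ} {C p ε : ℝ}

lemma valueClass_le (hC : 0 ≤ C) (hε : ε ∈ Set.Ioc 0 1) (hp : p ∈ Set.Ioc 0 1)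
    (hO : 0 < sampleExp E p (knapOPT C w v)) {i : ι} (hi : i ∈ E) (hwi : w i ≤ C)
    (hvi : 0 ≤ v i) :
    valueClass ε (v i / (ε * sampleExp E p (knapOPT C w v))) ≤ valueClass ε (1 / (ε * p)) := by
  have hεp : 0 < ε * p := mul_pos hε.1 hp.1
  refine valueClass_mono hε.1 (div_nonneg hvi (mul_pos hε.1 hO).le)
    ((one_le_div hεp).2 (mul_le_one₀ hε.2 hp.1.le hp.2)) ?_
  rw [div_le_div_iff₀ (mul_pos hε.1 hO) hεp, one_mul, mul_left_comm, mul_comm (v i)]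
  exact mul_le_mul_of_nonneg_left
    (mul_value_le_sampleExp_knapOPT (Set.Ioc_subset_Icc_self hp) hC hi hwi) hε.1.le

lemma exists_sparsifier_of_pos (hC : 0 < C) (hw : ∀ i ∈ E, 0 < w i ∧ w i ≤ C)
    (hv : ∀ i ∈ E, 0 ≤ v i) (hε : ε ∈ Set.Ioc 0 1) (hp : p ∈ Set.Ioc 0 1)
    (hO : 0 < sampleExp E p (knapOPT C w v)) :
    ∃ Q ⊆ E, ∑ i ∈ Q, w i ≤ (valueClass ε (1 / (ε * p)) + 1) * (tau ε / p * C + C) ∧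
      (1 - 3 * ε) * sampleExp E p (knapOPT C w v)
        ≤ sampleExp E p fun R => knapOPT C w v (Q ∩ R) := by
  set O := sampleExp E p (knapOPT C w v)
  let c : ι → ℕ := fun i => valueClass ε (v i / (ε * O))
  let s : Finset ℕ := range (valueClass ε (1 / (ε * p)) + 1)
  have hU : 0 < ε * O := mul_pos hε.1 hO
  have hτ : 0 ≤ tau ε / p * C + C := by
    have := one_le_tau hε
    have := hp.1
    positivity
  have hc : ∀ i ∈ E, c i ∈ s := fun i hi =>
    mem_range_succ_iff.2 (valueClass_le hC.le hε hp hO hi (hw i hi).2 (hv i hi))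
  have h_core (k : ℕ) := exists_isCore_of_valueClass (F := {i ∈ E | c i = k}) (k := k) hτ
    (fun i hi => hw i (mem_filter.1 hi).1) hε hU (fun i hi => hv i (mem_filter.1 hi).1)
    fun i hi => (mem_filter.1 hi).2
  choose Q hQ hQw using h_core
  have h_disj : (s : Set ℕ).PairwiseDisjoint Q := fun k _ l _ hkl =>
    disjoint_left.2 fun i hik hil =>
      hkl ((mem_filter.1 ((hQ k).subset hik)).2.symm.trans (mem_filter.1 ((hQ l).subset hil)).2)
  refine ⟨s.biUnion Q, biUnion_subset.2 fun k _ => (hQ k).subset.trans (filter_subset _ E), ?_, ?_⟩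
  · calc ∑ i ∈ s.biUnion Q, w i = ∑ k ∈ s, ∑ i ∈ Q k, w i := sum_biUnion h_disj
      _ ≤ #s • (tau ε / p * C + C) := sum_le_card_nsmul _ _ _ fun k _ => hQw k
      _ = _ := by rw [card_range, nsmul_eq_mul, Nat.cast_succ]
  · have h_loss : ∑ k ∈ s, (if k = 0 then ε * O else 0) = ε * O := by
      rw [sum_ite_eq', if_pos (mem_range.2 (Nat.succ_pos _))]
    calc (1 - 3 * ε) * O ≤ (1 - ε) * ((1 - ε) * O) - ε * O := by
          linarith [mul_nonneg (sq_nonneg ε) hO.le]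
      _ ≤ _ := h_loss ▸ le_sampleExp_knapOPT_biUnion hε hp hC
          (fun i hi => ⟨(hw i hi).1.le, (hw i hi).2⟩) hv
          ⟨sub_nonneg.2 hε.2, sub_le_self 1 hε.1.le⟩ (fun k _ => by split_ifs <;> positivity)
          hc fun k _ => hQ k

lemma exists_sparsifier (hC : 0 < C) (hw : ∀ i ∈ E, 0 < w i ∧ w i ≤ C) (hv : ∀ i ∈ E, 0 ≤ v i)
    (hε : ε ∈ Set.Ioc 0 1) (hp : p ∈ Set.Ioc 0 1) :
    ∃ Q ⊆ E, ∑ i ∈ Q, w i ≤ (valueClass ε (1 / (ε * p)) + 1) * (tau ε / p * C + C) ∧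
      (1 - 3 * ε) * sampleExp E p (knapOPT C w v)
        ≤ sampleExp E p fun R => knapOPT C w v (Q ∩ R) := by
  have hp' : p ∈ Set.Icc 0 1 := Set.Ioc_subset_Icc_self hp
  rcases (sampleExp_nonneg (E := E) hp' fun A _ => knapOPT_nonneg hC.le w v A).eq_or_lt with h | h
  · refine ⟨∅, empty_subset E, ?_, ?_⟩
    · have := one_le_tau hε
      have := hp.1
      rw [sum_empty]
      positivity
    · rw [← h, mul_zero]
      exact sampleExp_nonneg hp' fun A _ => knapOPT_nonneg hC.le w v _
  · exact exists_sparsifier_of_pos hC hw hv hε hp h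

theorem knapsack_sparsifier_general (hC : 0 < C) (hw : ∀ i ∈ E, 0 < w i ∧ w i ≤ C)
    (hv : ∀ i ∈ E, 0 ≤ v i) (hε : ε ∈ Set.Ioc 0 1) (hp : p ∈ Set.Ioc 0 1) :
    ∃ (Q : Finset ι) (d : ℝ), Q ⊆ E ∧ 1 ≤ d ∧
      d ≤ 2 * ((⌈Real.log (1 / (ε * p)) / Real.log (1 + ε)⌉₊ : ℝ) + 1) * (tau ε / p + 1) ∧
      (fun i => (1 / d) * (if i ∈ Q then (1 : ℝ) else 0)) ∈ knapsackPolytope E C w ∧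
      (1 - 3 * ε) * sampleExp E p (fun A => knapOPT C w v A)
        ≤ sampleExp E p (fun A => knapOPT C w v (Q ∩ A)) := by
  obtain ⟨Q, hQE, hQw, hQ⟩ := exists_sparsifier hC hw hv hε hp
  have h_degree : 1 ≤ 2 * ((valueClass ε (1 / (ε * p)) : ℝ) + 1) * (tau ε / p + 1) := by
    have := div_nonneg (zero_le_one.trans (one_le_tau hε)) hp.1.le
    nlinarith [(valueClass ε (1 / (ε * p))).cast_nonneg (α := ℝ)]
  obtain ⟨d, hd, hdD, hd_mem⟩ := exists_one_div_mul_indicator_mem_knapsackPolytope hC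
    (fun i hi => (hw i (hQE hi)).2) hQE h_degree (by linarith)
  exact ⟨Q, d, hQE, hd, hdD, hd_mem, hQ⟩

end Main

/-- **Knapsack Sparsifier Performance** (Theorem 3.2): for every knapsack instance,
`ε ∈ (0,1/3)` and `p ∈ (0,1]`, there is a query set `Q ⊆ E` of polyhedral degree
`d ≤ 2(K+1)(τ(ε)/p + 1)` (with `K = ⌈ln(1/(εp))/ln(1+ε)⌉`) which is a
`(1-4ε)`-approximate sparsifier. -/
theorem knapsack_sparsifier {ι : Type*} [DecidableEq ι]
    (E : Finset ι) (C : ℝ) (hC : 0 < C)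
    (w v : ι → ℝ) (hw : ∀ i ∈ E, 0 < w i ∧ w i ≤ C) (hv : ∀ i ∈ E, 0 ≤ v i)
    (ε p : ℝ) (hε : ε ∈ Set.Ioo (0 : ℝ) (1 / 3)) (hp : p ∈ Set.Ioc (0 : ℝ) 1) :
    ∃ (Q : Finset ι) (d : ℝ), Q ⊆ E ∧ 1 ≤ d ∧
      d ≤ 2 * ((⌈Real.log (1 / (ε * p)) / Real.log (1 + ε)⌉₊ : ℝ) + 1) * (tau ε / p + 1) ∧
      (fun i => (1 / d) * (if i ∈ Q then (1 : ℝ) else 0)) ∈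
        convexHull ℝ {x : ι → ℝ | ∃ S : Finset ι, S ⊆ E ∧ (∑ i ∈ S, w i) ≤ C ∧
          x = fun i => if i ∈ S then (1 : ℝ) else 0} ∧
      (1 - 4 * ε) * sampleExp E p (fun A => knapOPT C w v A)
        ≤ sampleExp E p (fun A => knapOPT C w v (Q ∩ A)) := by
  have hε' : ε ∈ Set.Ioc 0 1 := ⟨hε.1, by linarith [hε.2]⟩
  have hp' : p ∈ Set.Icc 0 1 := Set.Ioc_subset_Icc_self hp
  obtain ⟨Q, d, hQE, hd, hdD, hd_mem, hQ⟩ := knapsack_sparsifier_general hC hw hv hε' hp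
  refine ⟨Q, d, hQE, hd, hdD, hd_mem, le_trans ?_ hQ⟩
  have h_nonneg := sampleExp_nonneg (E := E) hp' fun A _ => knapOPT_nonneg hC.le w v A
  exact mul_le_mul_of_nonneg_right (by linarith [hε.1]) h_nonneg
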